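/- For every α with 0<α<1 there exists a constant M > 0 such that |E_α(−x)| ≤ M/(1+x) for all x ≥ 0; in particular |E_α(−x)| ≤ M for all x ≥ 0. -/

import Mathlib

open Set Filter

/-- The Mittag-Leffler function `E_α(z) = ∑_{k≥0} z^k/Γ(αk+1)`. -/
noncomputable def ml (α z : ℝ) : ℝ := ∑' k : ℕ, z ^ k / Real.Gamma (α * k + 1)

/-!
By Gauss' limit for `Γ`, the coefficient of `X ^ n` in `(1 - X) ^ (-(s + 1))` is asymptotic to
`n ^ s / Γ(s + 1)`. Hence `E_α(-x)` is the limit of the `n`-th coefficient of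
`U = ∑ (-l) ^ k (1 - X) ^ (-(αk + 1))` at `l = x / n ^ α`. Summing the geometric series,
`U = (1 - X) ^ (α - 1) * D⁻¹` with `D = (1 - X) ^ α + l`. All coefficients of `D` but the constant
one are nonpositive, so `D⁻¹` has nonnegative coefficients, and therefore so do `U` and
`1 - (1 - X) * U = l * D⁻¹`: the coefficients of `U` are nonnegative and decreasing. Reading off
the coefficients of `U + l (1 - X) ^ (-α) * U = (1 - X)⁻¹`, monotonicity bounds the convolution
from below and gives `Uₙ * (1 + l * [Xⁿ] (1 - X) ^ (-(α + 1))) ≤ 1`, which in the limit is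
`E_α(-x) * (1 + x / Γ(α + 1)) ≤ 1`. Finally `Γ(α + 1) ≤ 1`, so the theorem holds with `M = 1`.
-/

open PowerSeries
open scoped Topology

section Multichoose

variable {K : Type*} [Field K]

lemma multichoose_succ_eq_mul_div [CharZero K] (r : K) (n : ℕ) :
    Ring.multichoose r (n + 1) = Ring.multichoose r n * ((r + n) / (n + 1)) := by
  have hn : (n.factorial : K) ≠ 0 := mod_cast n.factorial_ne_zero
  have hn1 : (n : K) + 1 ≠ 0 := mod_cast n.succ_ne_zero
  have h := Ring.factorial_nsmul_multichoose_eq_ascPochhammer r n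
  have h1 := Ring.factorial_nsmul_multichoose_eq_ascPochhammer r (n + 1)
  rw [Polynomial.ascPochhammer_smeval_eq_eval, nsmul_eq_mul] at h h1
  rw [ascPochhammer_succ_eval, ← h, Nat.factorial_succ] at h1
  push_cast at h1
  field_simp
  apply mul_left_cancel₀ hn
  linear_combination h1

lemma prod_range_add_eq_factorial_mul_multichoose [CharZero K] (r : K) (n : ℕ) :
    ∏ j ∈ Finset.range n, (r + j) = n.factorial * Ring.multichoose r n := by
  induction n with
  | zero => simp
  | succ n ih =>
    have hn1 : (n : K) + 1 ≠ 0 := mod_cast n.succ_ne_zero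
    rw [Finset.prod_range_succ, ih, multichoose_succ_eq_mul_div, Nat.factorial_succ]
    push_cast
    field_simp

variable [LinearOrder K] [IsStrictOrderedRing K] {r : K}

lemma multichoose_nonneg (hr : 0 ≤ r) (n : ℕ) : 0 ≤ Ring.multichoose r n := by
  induction n with
  | zero => simp
  | succ n ih =>
    rw [multichoose_succ_eq_mul_div]
    positivity

lemma multichoose_succ_nonpos (hr : -1 ≤ r) (hr0 : r ≤ 0) (n : ℕ) :
    Ring.multichoose r (n + 1) ≤ 0 := by
  induction n with
  | zero => simpa using hr0
  | succ n ih =>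
    rw [multichoose_succ_eq_mul_div]
    have : (0 : K) ≤ n := n.cast_nonneg
    exact mul_nonpos_of_nonpos_of_nonneg ih
      (div_nonneg (by push_cast; linarith) (by positivity))

lemma multichoose_le_pow (hr : 1 ≤ r) (n : ℕ) : Ring.multichoose r n ≤ r ^ n := by
  induction n with
  | zero => simp
  | succ n ih =>
    have : (0 : K) ≤ n := n.cast_nonneg
    have hratio : (r + n) / (n + 1) ≤ r := by
      rw [div_le_iff₀ (by positivity)]
      nlinarith
    rw [multichoose_succ_eq_mul_div, pow_succ]
    gcongr

end Multichoose

section OrderedPowerSeries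

lemma coeff_mul_nonneg {R : Type*} [Semiring R] [PartialOrder R] [IsOrderedRing R] {f g : R⟦X⟧}
    (hf : ∀ n, 0 ≤ coeff n f) (hg : ∀ n, 0 ≤ coeff n g) (n : ℕ) : 0 ≤ coeff n (f * g) := by
  rw [coeff_mul]
  exact Finset.sum_nonneg fun p _ => mul_nonneg (hf p.1) (hg p.2)

lemma coeff_mul_mk_one_mul_coeff_le {R : Type*} [Semiring R] [PartialOrder R] [IsOrderedRing R]
    {f g : R⟦X⟧} (hf : ∀ n, 0 ≤ coeff n f) (hg : Antitone fun n => coeff n g) (n : ℕ) :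
    coeff n (f * mk 1) * coeff n g ≤ coeff n (f * g) := by
  simp only [coeff_mul, coeff_mk, Pi.one_apply, mul_one, Finset.sum_mul]
  exact Finset.sum_le_sum fun p hp =>
    mul_le_mul_of_nonneg_left (hg (Finset.HasAntidiagonal.antidiagonal.snd_le hp)) (hf p.1)

lemma coeff_inv_nonneg {K : Type*} [Field K] [LinearOrder K] [IsStrictOrderedRing K] {f : K⟦X⟧}
    (hf0 : 0 ≤ constantCoeff f) (hf : ∀ n, coeff (n + 1) f ≤ 0) (n : ℕ) : 0 ≤ coeff n f⁻¹ := by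
  induction n using Nat.strong_induction_on with
  | _ n ih =>
    rw [coeff_inv]
    split_ifs with hn
    · exact inv_nonneg.mpr hf0
    · refine mul_nonneg_of_nonpos_of_nonpos (neg_nonpos.mpr (inv_nonneg.mpr hf0))
        (Finset.sum_nonpos fun p hp => ?_)
      split_ifs with hlt
      · have hadd := Finset.HasAntidiagonal.mem_antidiagonal.mp hp
        obtain ⟨i, hi⟩ : ∃ i, p.1 = i + 1 := Nat.exists_eq_succ_of_ne_zero (by omega)
        rw [hi]
        exact mul_nonpos_of_nonpos_of_nonneg (hf i) (ih p.2 hlt)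
      · exact le_rfl

end OrderedPowerSeries

section NegBinomialSeries

variable {R : Type*} [CommRing R] [BinomialRing R]

/-- The negative binomial series `(1 - X) ^ (-r)`. The exponent is negated so that the coefficients
are the multichoose numbers `r (r + 1) ⋯ (r + n - 1) / n!`. -/
noncomputable def negBinomialSeries (r : R) : R⟦X⟧ := mk (Ring.multichoose r)

@[simp]
lemma coeff_negBinomialSeries (r : R) (n : ℕ) :
    coeff n (negBinomialSeries r) = Ring.multichoose r n :=
  coeff_mk n _

@[simp]
lemma constantCoeff_negBinomialSeries (r : R) : constantCoeff (negBinomialSeries r) = 1 := by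
  rw [← coeff_zero_eq_constantCoeff_apply, coeff_negBinomialSeries, Ring.multichoose_zero_right]

lemma negBinomialSeries_eq_rescale (r : R) :
    negBinomialSeries r = rescale (-1) (binomialSeries R (-r)) := by
  ext n
  rw [coeff_negBinomialSeries, coeff_rescale, binomialSeries_coeff, Ring.choose_neg', smul_eq_mul,
    mul_one, Units.smul_def, zsmul_eq_mul, Int.cast_negOnePow_natCast, ← mul_assoc, ← mul_pow]
  simp

lemma negBinomialSeries_add (r s : R) :
    negBinomialSeries (r + s) = negBinomialSeries r * negBinomialSeries s := by
  simp only [negBinomialSeries_eq_rescale, neg_add, binomialSeries_add, map_mul]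

lemma negBinomialSeries_zero : negBinomialSeries (0 : R) = 1 := by
  simp [negBinomialSeries_eq_rescale]

lemma negBinomialSeries_one : negBinomialSeries (1 : R) = mk 1 := by
  ext n
  simp [Ring.multichoose_one]

lemma negBinomialSeries_neg_mul_self (r : R) :
    negBinomialSeries (-r) * negBinomialSeries r = 1 := by
  rw [← negBinomialSeries_add, neg_add_cancel, negBinomialSeries_zero]

lemma one_sub_X_mul_negBinomialSeries_one_sub (r : R) :
    (1 - X) * negBinomialSeries (1 - r) = negBinomialSeries (-r) := by
  rw [sub_eq_add_neg 1 r, negBinomialSeries_add, negBinomialSeries_one, ← mul_assoc,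
    mul_comm (1 - X), mk_one_mul_one_sub_eq_one, one_mul]

end NegBinomialSeries

section DiscreteMittagLeffler

variable {K : Type*} [Field K] [LinearOrder K] [IsStrictOrderedRing K] {a l : K}

/-- The generating function of the discrete Mittag-Leffler function, in the closed form
`(1 - X) ^ (a - 1) / ((1 - X) ^ a + l)` of the series `∑ (-l) ^ k (1 - X) ^ (-(a k + 1))`. The
closed form makes sense for all `l ≥ 0`, whereas the series needs `l < 1`. -/
noncomputable def discreteMLSeries (a l : K) : K⟦X⟧ :=
  negBinomialSeries (1 - a) * (negBinomialSeries (-a) + C l)⁻¹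

lemma constantCoeff_negBinomialSeries_add_C_pos (r : K) (hl : 0 ≤ l) :
    0 < constantCoeff (negBinomialSeries r + C l) := by
  rw [map_add, constantCoeff_negBinomialSeries, constantCoeff_C]
  positivity

lemma eq_discreteMLSeries_iff (hl : 0 ≤ l) {f : K⟦X⟧} :
    f = discreteMLSeries a l ↔ f + C l * (negBinomialSeries a * f) = mk 1 := by
  rw [discreteMLSeries,
    PowerSeries.eq_mul_inv_iff_mul_eq (constantCoeff_negBinomialSeries_add_C_pos _ hl).ne',
    ← negBinomialSeries_one]
  have hinv := negBinomialSeries_neg_mul_self a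
  have hadd : negBinomialSeries (1 - a) = negBinomialSeries 1 * negBinomialSeries (-a) := by
    rw [← negBinomialSeries_add, sub_eq_add_neg]
  constructor <;> intro h
  · linear_combination negBinomialSeries a * (h + hadd) + (negBinomialSeries 1 - f) * hinv
  · linear_combination negBinomialSeries (-a) * h - hadd - C l * f * hinv

lemma coeff_inv_negBinomialSeries_add_C_nonneg (ha : 0 ≤ a) (ha1 : a ≤ 1) (hl : 0 ≤ l) (n : ℕ) :
    0 ≤ coeff n (negBinomialSeries (-a) + C l)⁻¹ := by
  refine coeff_inv_nonneg (constantCoeff_negBinomialSeries_add_C_pos _ hl).le (fun n => ?_) n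
  rw [map_add, coeff_negBinomialSeries, coeff_succ_C, add_zero]
  exact multichoose_succ_nonpos (neg_le_neg ha1) (neg_nonpos.mpr ha) n

lemma coeff_discreteMLSeries_nonneg (ha : 0 ≤ a) (ha1 : a ≤ 1) (hl : 0 ≤ l) (n : ℕ) :
    0 ≤ coeff n (discreteMLSeries a l) := by
  refine coeff_mul_nonneg (fun n => ?_) (coeff_inv_negBinomialSeries_add_C_nonneg ha ha1 hl) n
  rw [coeff_negBinomialSeries]
  exact multichoose_nonneg (sub_nonneg.mpr ha1) n

lemma one_sub_X_mul_discreteMLSeries (a : K) (hl : 0 ≤ l) :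
    (1 - X) * discreteMLSeries a l = 1 - C l * (negBinomialSeries (-a) + C l)⁻¹ := by
  have hinv := PowerSeries.mul_inv_cancel _ (constantCoeff_negBinomialSeries_add_C_pos (-a) hl).ne'
  rw [discreteMLSeries, ← mul_assoc, one_sub_X_mul_negBinomialSeries_one_sub]
  linear_combination hinv

lemma antitone_coeff_discreteMLSeries (ha : 0 ≤ a) (ha1 : a ≤ 1) (hl : 0 ≤ l) :
    Antitone fun n => coeff n (discreteMLSeries a l) := by
  refine antitone_nat_of_succ_le fun n => ?_
  have hdiff := congrArg (coeff (n + 1)) (one_sub_X_mul_discreteMLSeries a hl)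
  rw [sub_mul, one_mul, map_sub, map_sub, coeff_succ_X_mul, coeff_C_mul, coeff_one,
    if_neg n.succ_ne_zero] at hdiff
  have := mul_nonneg hl (coeff_inv_negBinomialSeries_add_C_nonneg ha ha1 hl (n + 1))
  linarith

lemma coeff_discreteMLSeries_mul_le_one (ha : 0 ≤ a) (ha1 : a ≤ 1) (hl : 0 ≤ l) (n : ℕ) :
    coeff n (discreteMLSeries a l) * (1 + l * Ring.multichoose (a + 1) n) ≤ 1 := by
  set U := discreteMLSeries a l
  have hconv : Ring.multichoose (a + 1) n * coeff n U ≤ coeff n (negBinomialSeries a * U) := by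
    rw [← coeff_negBinomialSeries, negBinomialSeries_add, negBinomialSeries_one]
    refine coeff_mul_mk_one_mul_coeff_le (fun n => ?_) (antitone_coeff_discreteMLSeries ha ha1 hl) n
    rw [coeff_negBinomialSeries]
    exact multichoose_nonneg ha n
  calc coeff n U * (1 + l * Ring.multichoose (a + 1) n)
      = coeff n U + l * (Ring.multichoose (a + 1) n * coeff n U) := by ring
    _ ≤ coeff n U + l * coeff n (negBinomialSeries a * U) := by gcongr
    _ = coeff n (U + C l * (negBinomialSeries a * U)) := by rw [map_add, coeff_C_mul]
    _ = 1 := by rw [(eq_discreteMLSeries_iff hl).mp rfl, coeff_mk, Pi.one_apply]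

end DiscreteMittagLeffler

section Convergence

lemma summable_pow_mul_linear_pow {q : ℝ} (hq : |q| < 1) (a b : ℝ) (m : ℕ) :
    Summable fun k : ℕ => q ^ k * (a * k + b) ^ m := by
  simp_rw [add_pow, Finset.mul_sum]
  refine summable_sum fun i _ => ?_
  refine ((summable_pow_mul_geometric_of_norm_lt_one i hq).mul_left
    (a ^ i * b ^ (m - i) * m.choose i)).congr fun k => ?_
  ring

lemma norm_pow_mul_multichoose_le {a : ℝ} (ha : 0 ≤ a) (l : ℝ) (n k : ℕ) :
    ‖(-l) ^ k * Ring.multichoose (a * k + 1) n‖ ≤ |l| ^ k * (a * k + 1) ^ n := by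
  have hr : 1 ≤ a * k + 1 := le_add_of_nonneg_left (by positivity)
  rw [norm_mul, norm_pow, norm_neg, Real.norm_eq_abs,
    Real.norm_of_nonneg (multichoose_nonneg (zero_le_one.trans hr) n)]
  gcongr
  exact multichoose_le_pow hr n

open scoped PowerSeries.WithPiTopology in
lemma hasSum_discreteMLSeries {a l : ℝ} (ha : 0 ≤ a) (hl : 0 ≤ l) (hl1 : l < 1) :
    HasSum (fun k : ℕ => C ((-l) ^ k) * negBinomialSeries (a * k + 1)) (discreteMLSeries a l) := by
  set f : ℕ → ℝ⟦X⟧ := fun k => C ((-l) ^ k) * negBinomialSeries (a * k + 1)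
  have hf : Summable f := by
    refine (WithPiTopology.summable_iff_summable_coeff ℝ).mpr fun n => ?_
    simp only [f, coeff_C_mul, coeff_negBinomialSeries]
    refine (summable_pow_mul_linear_pow (q := |l|) ?_ a 1 n).of_norm_bounded
      (norm_pow_mul_multichoose_le ha l n)
    rwa [abs_abs, abs_of_nonneg hl]
  have hf_zero : f 0 = mk 1 := by simp [f, negBinomialSeries_one]
  have hf_succ (k : ℕ) : f (k + 1) = -(C l * negBinomialSeries a) * f k := by
    simp only [f]
    rw [show a * ((k + 1 : ℕ) : ℝ) + 1 = a + (a * k + 1) by push_cast; ring,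
      negBinomialSeries_add, pow_succ, map_mul, map_neg]
    ring
  have hsum : ∑' k, f k = mk 1 + -(C l * negBinomialSeries a) * ∑' k, f k := by
    rw [← hf.tsum_mul_left, ← hf_zero]
    simp_rw [← hf_succ]
    exact hf.tsum_eq_zero_add
  rw [← (eq_discreteMLSeries_iff hl (f := ∑' k, f k)).mpr (by linear_combination hsum)]
  exact hf.hasSum

open scoped PowerSeries.WithPiTopology in
lemma coeff_discreteMLSeries_eq_tsum {a l : ℝ} (ha : 0 ≤ a) (hl : 0 ≤ l) (hl1 : l < 1) (n : ℕ) :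
    coeff n (discreteMLSeries a l) = ∑' k : ℕ, (-l) ^ k * Ring.multichoose (a * k + 1) n := by
  have h := (WithPiTopology.hasSum_iff_hasSum_coeff ℝ).mp (hasSum_discreteMLSeries ha hl hl1) n
  simpa only [coeff_C_mul, coeff_negBinomialSeries] using h.tsum_eq.symm

lemma multichoose_div_rpow_eq {s : ℝ} (hs : -1 < s) {n : ℕ} (hn : n ≠ 0) :
    Ring.multichoose (s + 1) n / (n : ℝ) ^ s =
      n / (n + (s + 1)) * (Real.GammaSeq (s + 1) n)⁻¹ := by
  have hn0 : (0 : ℝ) < n := by positivity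
  have hs1 : 0 < s + 1 := by linarith
  have : 0 < (n : ℝ) ^ s := Real.rpow_pos_of_pos hn0 s
  rw [Real.GammaSeq, Finset.prod_range_succ, prod_range_add_eq_factorial_mul_multichoose,
    Real.rpow_add_one hn0.ne']
  field_simp
  ring

lemma tendsto_multichoose_div_rpow {s : ℝ} (hs : -1 < s) :
    Tendsto (fun n : ℕ => Ring.multichoose (s + 1) n / (n : ℝ) ^ s) atTop
      (𝓝 (Real.Gamma (s + 1))⁻¹) := by
  have hΓ : Real.Gamma (s + 1) ≠ 0 := (Real.Gamma_pos_of_pos (by linarith)).ne'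
  have h := (tendsto_natCast_div_add_atTop (s + 1)).mul
    ((Real.GammaSeq_tendsto_Gamma (s + 1)).inv₀ hΓ)
  rw [one_mul] at h
  refine h.congr' ?_
  filter_upwards [eventually_ne_atTop 0] with n hn
  exact (multichoose_div_rpow_eq hs hn).symm

lemma add_div_add_one_le_rpow {s : ℝ} (hs : 0 ≤ s) {t : ℝ} (ht : 0 < t) :
    (s + 1 + t) / (t + 1) ≤ ((t + 1) / t) ^ s := by
  have hlog : 1 - ((t + 1) / t)⁻¹ ≤ Real.log ((t + 1) / t) :=
    Real.one_sub_inv_le_log_of_pos (by positivity)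
  calc (s + 1 + t) / (t + 1) = (1 - ((t + 1) / t)⁻¹) * s + 1 := by field_simp; ring
    _ ≤ Real.log ((t + 1) / t) * s + 1 := by gcongr
    _ ≤ Real.exp (Real.log ((t + 1) / t) * s) := Real.add_one_le_exp _
    _ = ((t + 1) / t) ^ s := (Real.rpow_def_of_pos (by positivity) s).symm

lemma antitoneOn_multichoose_div_rpow {s : ℝ} (hs : 0 ≤ s) :
    AntitoneOn (fun n : ℕ => Ring.multichoose (s + 1) n / (n : ℝ) ^ s) (Ici 1) := by
  refine antitoneOn_nat_Ici_of_succ_le fun n hn => ?_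
  have hn0 : (0 : ℝ) < n := Nat.cast_pos.mpr hn
  have hratio := add_div_add_one_le_rpow hs hn0
  rw [Real.div_rpow (by positivity) hn0.le, le_div_iff₀ (by positivity)] at hratio
  rw [multichoose_succ_eq_mul_div, div_le_div_iff₀ (by positivity) (by positivity), mul_assoc]
  push_cast
  exact mul_le_mul_of_nonneg_left hratio (multichoose_nonneg (by positivity) n)

lemma neg_div_rpow_pow_mul_multichoose (a x : ℝ) (n k : ℕ) :
    (-(x / (n : ℝ) ^ a)) ^ k * Ring.multichoose (a * k + 1) n =
      (-x) ^ k * (Ring.multichoose (a * k + 1) n / (n : ℝ) ^ (a * k)) := by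
  rw [Real.rpow_mul_natCast n.cast_nonneg, ← neg_div, div_pow]
  ring

lemma eventually_div_rpow_lt_one {a : ℝ} (ha : 0 < a) (x : ℝ) :
    ∀ᶠ n : ℕ in atTop, x / (n : ℝ) ^ a < 1 :=
  (((tendsto_rpow_atTop ha).comp tendsto_natCast_atTop_atTop).const_div_atTop x).eventually_lt_const
    zero_lt_one

lemma tendsto_coeff_discreteMLSeries {a x : ℝ} (ha : 0 < a) (hx : 0 ≤ x) :
    Tendsto (fun n : ℕ => coeff n (discreteMLSeries a (x / (n : ℝ) ^ a))) atTop
      (𝓝 (ml a (-x))) := by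
  obtain ⟨m, hxm, hm⟩ :=
    ((eventually_div_rpow_lt_one ha x).and (eventually_ge_atTop 1)).exists
  have hseries : Tendsto (fun n : ℕ => ∑' k : ℕ,
      (-x) ^ k * (Ring.multichoose (a * k + 1) n / (n : ℝ) ^ (a * k))) atTop (𝓝 (ml a (-x))) := by
    -- The terms decrease in absolute value as `n` grows, so those at `n = m`
    -- dominate the later ones, and they are summable because `x < m ^ a`.
    refine tendsto_tsum_of_dominated_convergence
      (bound := fun k => |x / (m : ℝ) ^ a| ^ k * (a * k + 1) ^ m)
      (summable_pow_mul_linear_pow ?_ a 1 m) (fun k => ?_) ?_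
    · rwa [abs_abs, abs_of_nonneg (by positivity)]
    · have hak : -1 < a * k := neg_one_lt_zero.trans_le (by positivity)
      exact (tendsto_multichoose_div_rpow hak).const_mul _
    · filter_upwards [eventually_ge_atTop m] with n hmn k
      have hak : 0 ≤ a * k := by positivity
      have hnonneg (j : ℕ) : 0 ≤ Ring.multichoose (a * k + 1) j / (j : ℝ) ^ (a * k) :=
        div_nonneg (multichoose_nonneg (by positivity) j) (by positivity)
      refine le_trans ?_ (norm_pow_mul_multichoose_le ha.le (x / (m : ℝ) ^ a) m k)
      rw [neg_div_rpow_pow_mul_multichoose, norm_mul, norm_mul, Real.norm_of_nonneg (hnonneg n),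
        Real.norm_of_nonneg (hnonneg m)]
      exact mul_le_mul_of_nonneg_left (antitoneOn_multichoose_div_rpow hak hm (hm.trans hmn) hmn)
        (norm_nonneg _)
  refine hseries.congr' ?_
  filter_upwards [eventually_div_rpow_lt_one ha x] with n hn
  rw [coeff_discreteMLSeries_eq_tsum ha.le (by positivity) hn]
  simp_rw [neg_div_rpow_pow_mul_multichoose]

end Convergence

section Bounds

variable {α x : ℝ}

lemma ml_neg_nonneg (hα : 0 < α) (hα1 : α ≤ 1) (hx : 0 ≤ x) : 0 ≤ ml α (-x) :=
  ge_of_tendsto' (tendsto_coeff_discreteMLSeries hα hx) fun n =>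
    coeff_discreteMLSeries_nonneg hα.le hα1 (by positivity) n

lemma ml_neg_le_inv (hα : 0 < α) (hα1 : α ≤ 1) (hx : 0 ≤ x) :
    ml α (-x) ≤ (1 + x / Real.Gamma (α + 1))⁻¹ := by
  have : 0 < Real.Gamma (α + 1) := Real.Gamma_pos_of_pos (by positivity)
  rw [← one_div, le_div_iff₀ (by positivity), div_eq_mul_inv]
  have hlim := (tendsto_coeff_discreteMLSeries hα hx).mul
    (((tendsto_multichoose_div_rpow (neg_one_lt_zero.trans hα)).const_mul x).const_add 1)
  refine le_of_tendsto' hlim fun n => ?_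
  have hle := coeff_discreteMLSeries_mul_le_one hα.le hα1 (l := x / (n : ℝ) ^ α) (by positivity) n
  rwa [div_mul_eq_mul_div, mul_div_assoc] at hle

lemma Gamma_add_one_le_one (hα : 0 ≤ α) (hα1 : α ≤ 1) : Real.Gamma (α + 1) ≤ 1 := by
  have h := Real.convexOn_Gamma.2 (mem_Ioi.mpr one_pos) (mem_Ioi.mpr two_pos)
    (sub_nonneg.mpr hα1) hα (sub_add_cancel 1 α)
  simp only [smul_eq_mul, Real.Gamma_one, Real.Gamma_two] at h
  rwa [show (1 - α) * 1 + α * 2 = α + 1 by ring, show (1 - α) * 1 + α * 1 = 1 by ring] at h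

theorem mittagLeffler_bound_general (hα : 0 < α) (hα1 : α ≤ 1) (hx : 0 ≤ x) :
    |ml α (-x)| ≤ 1 / (1 + x) := by
  have hΓ : 0 < Real.Gamma (α + 1) := Real.Gamma_pos_of_pos (by positivity)
  calc |ml α (-x)| = ml α (-x) := abs_of_nonneg (ml_neg_nonneg hα hα1 hx)
    _ ≤ (1 + x / Real.Gamma (α + 1))⁻¹ := ml_neg_le_inv hα hα1 hx
    _ ≤ (1 + x)⁻¹ := by
        gcongr
        exact le_div_self hx hΓ (Gamma_add_one_le_one hα.le hα1)
    _ = 1 / (1 + x) := (one_div _).symm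

end Bounds

/-- for `0<α<1` there is `M > 0` with `|E_α(−x)| ≤ M/(1+x)` for all
`x ≥ 0`; in particular `|E_α(−x)| ≤ M` for all `x ≥ 0`. -/
theorem mittagLeffler_bound (α : ℝ) (hα : 0 < α) (hα1 : α < 1) :
    ∃ M : ℝ, 0 < M ∧
      (∀ x : ℝ, 0 ≤ x → |ml α (-x)| ≤ M / (1 + x)) ∧
      (∀ x : ℝ, 0 ≤ x → |ml α (-x)| ≤ M) :=
  ⟨1, one_pos, fun _ hx => mittagLeffler_bound_general hα hα1.le hx, fun _ hx =>
    (mittagLeffler_bound_general hα hα1.le hx).trans (div_le_self zero_le_one (by linarith))⟩
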